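/- Let m, n : ℕ with 1 ≤ m < n and n ≠ 2m, and let y ∈ ℂ⟦T⟧ be a formal power series with ord y = n. Set x := T^m and v := ((Dx)² + (Dy)²)·((Dx)·(D³y) − (D³x)·(Dy)) + 3·((Dx)·(D²x) + (Dy)·(D²y))·((D²x)·(Dy) − (Dx)·(D²y)). Then ord v = 3m + n − 6 (as elements of ℕ∞; note 3m + n − 6 ≥ 0 under the hypotheses). -/

import Mathlib

open PowerSeries

/-- The formal derivative on `ℂ⟦T⟧`. -/
noncomputable def D : PowerSeries ℂ → PowerSeries ℂ := fun f => PowerSeries.derivative ℂ f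

/-- The vertex series of the parametrised curve `(x, y)`:
`v = (x'² + y'²)(x'y''' − x'''y') + 3(x'x'' + y'y'')(x''y' − x'y'')`. -/
noncomputable def vser (x y : PowerSeries ℂ) : PowerSeries ℂ :=
  ((D x) ^ 2 + (D y) ^ 2) * (D x * D (D (D y)) - D (D (D x)) * D y) +
    3 * (D x * D (D x) + D y * D (D y)) * (D (D x) * D y - D x * D (D y))

/-!
Replace each derivative `f⁽ᵏ⁾` by `Xᵏ f⁽ᵏ⁾`, which multiplies the coefficient of `Xⁱ` by the
falling factorial `i (i - 1) ⋯ (i - k + 1)`. In every monomial of the vertex series `v` the orders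
of the derivatives add up to six, so this amounts to multiplying `v` by `X⁶`. If `x = a Xᵐ + ⋯` and
`y = b Xⁿ + ⋯` with `m < n`, the summands `y'²` and `y' y''` do not contribute to the lowest term,
and up to powers of `X` the remaining factors start with

* `x'²`: `m² a²`, and `x' x''`: `m² (m - 1) a²`;
* `x' y''' - x''' y'`: `m n (n - m) (m + n - 3) a b`;
* `x'' y' - x' y''`: `-m n (n - m) a b`.

Since `(m + n - 3) - 3 (m - 1) = n - 2 m`, the coefficient of `X ^ (3 m + n)` in `X⁶ v` is
`m³ n (n - m) (n - 2 m) a³ b`.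
-/

/-- The vertex series over an arbitrary commutative ring of coefficients; `vser` is the case of
`ℂ`. Higher derivatives are written as iterates of `d⁄dX R`. -/
noncomputable def vertexSeries {R : Type*} [CommRing R] (x y : R⟦X⟧) : R⟦X⟧ :=
  ((d⁄dX R x) ^ 2 + (d⁄dX R y) ^ 2) *
      (d⁄dX R x * (d⁄dX R)^[3] y - (d⁄dX R)^[3] x * d⁄dX R y) +
    3 * (d⁄dX R x * (d⁄dX R)^[2] x + d⁄dX R y * (d⁄dX R)^[2] y) *
      ((d⁄dX R)^[2] x * d⁄dX R y - d⁄dX R x * (d⁄dX R)^[2] y)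

/-- `f = c Xⁿ + (terms of degree > n)`, for tracking lowest terms through a polynomial expression.
The coefficient `c` is allowed to vanish, so that sums need no case distinction on cancellation. -/
def HasLeadingTerm {R : Type*} [Semiring R] (f : R⟦X⟧) (n : ℕ) (c : R) : Prop :=
  X ^ n ∣ f ∧ coeff n f = c

theorem coeff_X_pow_mul_iterate_derivative {R : Type*} [CommSemiring R] (f : R⟦X⟧) (k i : ℕ) :
    coeff i (X ^ k * (d⁄dX R)^[k] f) = i.descFactorial k * coeff i f := by
  rw [coeff_X_pow_mul']
  split_ifs with hki
  · obtain ⟨j, rfl⟩ := Nat.exists_eq_add_of_le' hki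
    rw [Nat.add_sub_cancel, coeff_iterate_derivative, Nat.add_descFactorial_eq_ascFactorial]
  · rw [Nat.descFactorial_of_lt (not_le.mp hki), Nat.cast_zero, zero_mul]

theorem cast_descFactorial_three {R : Type*} [Ring R] (n : ℕ) :
    (n.descFactorial 3 : R) = n * (n - 1) * (n - 2) := by
  rw [← descPochhammer_eval_eq_descFactorial]
  simp [descPochhammer_succ_eval]

theorem order_eq_sub_of_order_X_pow_mul {R : Type*} [Semiring R] [NoZeroDivisors R]
    [Nontrivial R] {f : R⟦X⟧} {k n : ℕ} (h : (X ^ k * f : R⟦X⟧).order = n) :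
    f.order = (n - k : ℕ) := by
  rw [order_mul, order_X_pow] at h
  rw [ENat.natCast_sub, ← h, (ENat.addLECancellable_natCast k).add_tsub_cancel_left]

namespace HasLeadingTerm

section Semiring

variable {R : Type*} [Semiring R] {f g : R⟦X⟧} {k n : ℕ} {a b c : R}

theorem congr (h : HasLeadingTerm f n a) (hfg : f = g) (hab : a = b) : HasLeadingTerm g n b :=
  hfg ▸ hab ▸ h

theorem of_order_eq (h : f.order = n) : HasLeadingTerm f n (coeff n f) :=
  ⟨X_pow_dvd_iff.mpr (order_eq_nat.mp h).2, rfl⟩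

theorem order_eq (h : HasLeadingTerm f n c) (hc : c ≠ 0) : f.order = n :=
  order_eq_nat.mpr ⟨h.2.symm ▸ hc, X_pow_dvd_iff.mp h.1⟩

theorem of_lt (h : HasLeadingTerm f n c) (hkn : k < n) : HasLeadingTerm f k 0 :=
  ⟨(pow_dvd_pow X hkn.le).trans h.1, X_pow_dvd_iff.mp h.1 k hkn⟩

theorem add (hf : HasLeadingTerm f n a) (hg : HasLeadingTerm g n b) :
    HasLeadingTerm (f + g) n (a + b) :=
  ⟨dvd_add hf.1 hg.1, by rw [map_add, hf.2, hg.2]⟩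

theorem mul (hf : HasLeadingTerm f k a) (hg : HasLeadingTerm g n b) :
    HasLeadingTerm (f * g) (k + n) (a * b) := by
  obtain ⟨⟨u, rfl⟩, rfl⟩ := hf
  obtain ⟨⟨v, rfl⟩, rfl⟩ := hg
  have hmul : X ^ k * u * (X ^ n * v) = X ^ (k + n) * (u * v) := by
    rw [pow_add, mul_assoc, ← mul_assoc u, ← X_pow_mul, mul_assoc, mul_assoc]
  refine ⟨Dvd.intro _ hmul.symm, ?_⟩
  rw [hmul]
  simp [coeff_X_pow_mul']

theorem C_mul (c : R) (hf : HasLeadingTerm f n a) : HasLeadingTerm (C c * f) n (c * a) := by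
  have hC : HasLeadingTerm (C c) 0 c := ⟨by simp, by simp⟩
  simpa only [zero_add] using hC.mul hf

end Semiring

section CommSemiring

variable {R : Type*} [CommSemiring R] {f : R⟦X⟧} {n : ℕ} {c : R}

theorem X_pow_mul_iterate_derivative (hf : HasLeadingTerm f n c) (k : ℕ) :
    HasLeadingTerm (X ^ k * (d⁄dX R)^[k] f) n (n.descFactorial k * c) := by
  refine ⟨X_pow_dvd_iff.mpr fun i hi => ?_, ?_⟩
  · rw [coeff_X_pow_mul_iterate_derivative, X_pow_dvd_iff.mp hf.1 i hi, mul_zero]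
  · rw [coeff_X_pow_mul_iterate_derivative, hf.2]

theorem X_mul_derivative (hf : HasLeadingTerm f n c) :
    HasLeadingTerm (X * d⁄dX R f) n (n * c) := by
  simpa using hf.X_pow_mul_iterate_derivative 1

end CommSemiring

theorem sub {R : Type*} [Ring R] {f g : R⟦X⟧} {n : ℕ} {a b : R}
    (hf : HasLeadingTerm f n a) (hg : HasLeadingTerm g n b) :
    HasLeadingTerm (f - g) n (a - b) :=
  ⟨dvd_sub hf.1 hg.1, by rw [map_sub, hf.2, hg.2]⟩

section CommRing

variable {R : Type*} [CommRing R] {f x y : R⟦X⟧} {m n : ℕ} {a b c : R}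

theorem X_sq_mul_derivative_two (hf : HasLeadingTerm f n c) :
    HasLeadingTerm (X ^ 2 * (d⁄dX R)^[2] f) n (n * (n - 1) * c) := by
  simpa only [Nat.cast_descFactorial_two] using hf.X_pow_mul_iterate_derivative 2

theorem X_cube_mul_derivative_three (hf : HasLeadingTerm f n c) :
    HasLeadingTerm (X ^ 3 * (d⁄dX R)^[3] f) n (n * (n - 1) * (n - 2) * c) := by
  simpa only [cast_descFactorial_three] using hf.X_pow_mul_iterate_derivative 3

theorem X_pow_six_mul_vertexSeries (hx : HasLeadingTerm x m a) (hy : HasLeadingTerm y n b)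
    (hmn : m < n) :
    HasLeadingTerm (X ^ 6 * vertexSeries x y) (3 * m + n)
      (m ^ 3 * n * (n - m) * (n - 2 * m) * (a ^ 3 * b)) := by
  have hx₁ := hx.X_mul_derivative
  have hx₂ := hx.X_sq_mul_derivative_two
  have hx₃ := hx.X_cube_mul_derivative_three
  have hy₁ := hy.X_mul_derivative
  have hy₂ := hy.X_sq_mul_derivative_two
  have hy₃ := hy.X_cube_mul_derivative_three
  have hlt : m + m < n + n := by lia
  have speed_sq : HasLeadingTerm (X ^ 2 * ((d⁄dX R x) ^ 2 + (d⁄dX R y) ^ 2))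
      (m + m) (m ^ 2 * a ^ 2) :=
    ((hx₁.mul hx₁).add <| (hy₁.mul hy₁).of_lt hlt).congr (by ring) (by ring)
  have half_speed_sq_deriv :
      HasLeadingTerm (X ^ 3 * (d⁄dX R x * (d⁄dX R)^[2] x + d⁄dX R y * (d⁄dX R)^[2] y))
        (m + m) (m ^ 2 * (m - 1) * a ^ 2) :=
    ((hx₁.mul hx₂).add <| (hy₁.mul hy₂).of_lt hlt).congr (by ring) (by ring)
  have wronskian_deriv :
      HasLeadingTerm (X ^ 4 * (d⁄dX R x * (d⁄dX R)^[3] y - (d⁄dX R)^[3] x * d⁄dX R y))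
        (m + n) (m * n * (n - m) * (m + n - 3) * (a * b)) :=
    ((hx₁.mul hy₃).sub (hx₃.mul hy₁)).congr (by ring) (by ring)
  have neg_wronskian :
      HasLeadingTerm (X ^ 3 * ((d⁄dX R)^[2] x * d⁄dX R y - d⁄dX R x * (d⁄dX R)^[2] y))
        (m + n) (-(m * n * (n - m) * (a * b))) :=
    ((hx₂.mul hy₁).sub (hx₁.mul hy₂)).congr (by ring) (by ring)
  convert (speed_sq.mul wronskian_deriv).add
    ((half_speed_sq_deriv.mul neg_wronskian).C_mul 3) using 1
  · rw [vertexSeries, map_ofNat]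
    ring
  · ring
  · ring

end CommRing

end HasLeadingTerm

theorem order_vertex_series_general {R : Type*} [CommRing R] [NoZeroDivisors R] [CharZero R]
    {m n : ℕ} (hm : 1 ≤ m) (hmn : m < n) (hn2m : n ≠ 2 * m) {x y : R⟦X⟧}
    (hx : x.order = m) (hy : y.order = n) :
    (vertexSeries x y).order = ((3 * m + n - 6 : ℕ) : ℕ∞) := by
  have hlead := (HasLeadingTerm.of_order_eq hx).X_pow_six_mul_vertexSeries (.of_order_eq hy) hmn
  refine order_eq_sub_of_order_X_pow_mul (hlead.order_eq ?_)
  have ha : coeff m x ≠ 0 := (order_eq_nat.mp hx).1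
  have hb : coeff n y ≠ 0 := (order_eq_nat.mp hy).1
  have hm₀ : (m : R) ≠ 0 := Nat.cast_ne_zero.mpr (by lia)
  have hn₀ : (n : R) ≠ 0 := Nat.cast_ne_zero.mpr (by lia)
  have hnm : (n : R) - m ≠ 0 := sub_ne_zero.mpr (Nat.cast_injective.ne hmn.ne')
  have hn2m₀ : (n : R) - 2 * m ≠ 0 := sub_ne_zero.mpr (by exact_mod_cast hn2m)
  simp [*]

/-- **Theorem 2.6(3), generic case.** For the parametrised curve `γ(t) = (t^m, y(t))`
with `1 ≤ m < n = ord y` and `n ≠ 2m`, the order of the vertex series (the number of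
vertices concentrated at the singular point) is `3m + n − 6`. -/
theorem order_vertex_series (m n : ℕ) (hm : 1 ≤ m) (hmn : m < n) (hn2m : n ≠ 2 * m)
    (y : PowerSeries ℂ) (hy : y.order = n) :
    (vser ((X : PowerSeries ℂ) ^ m) y).order = ((3 * m + n - 6 : ℕ) : ℕ∞) := by
  exact order_vertex_series_general hm hmn hn2m (order_X_pow m) hy
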